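/- Geometric properties of special pattern cells: Fix k ≥ 2, M ≥ 1, n ∈ ℕ, and 0 ≤ 2τ ≤ r₂ ≤ M. With w' = 6M^{1/k}, R = (1/10)(r₂/n)^{1/k}, R' = (1 − 10^{−k})^{1/k}(r₂/n)^{1/k}, R'' = (r₂/n)^{1/k}, R''' = √k·w'/n^{1/k} + 2(M/n)^{1/k}, and A an axis-aligned hypercube of side length w'/n^{1/k} with center x_A contained in [0,1]^k, the following hold. (P1) Vol(B(x_A, R'') \ B(x_A, R')) = Vol(B(x_A, R)) = κ_k·r₂/(10^k·n) ≥ κ_k·2τ/(10^k·n). (P2) For any x₀ ∈ B(x_A, R) and x₁ ∈ B(x_A, R'') \ B(x_A, R'), the map ℓ ↦ I(ℓ; x₀, x₁) is convex on [r₂ − 2τ, r₂], and there exists a constant α > 0 depending only on M and k such that I(r₂; x₀, x₁) − 2I(r₂ − τ; x₀, x₁) + I(r₂ − 2τ; x₀, x₁) ≥ (α/n)·τ². (P3) B(x_A, R'' + (M/n)^{1/k}) ⊆ A and A ⊆ B(x_A, R'''). (P4) Every point d ∈ [0,1]^k \ B(x_A, R''') satisfies dist(d, A) > 2(M/n)^{1/k}.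 -/

import Mathlib

open MeasureTheory

noncomputable section

/-- `I(ℓ; x₀, x₁)` : the volume of the intersection of the two closed balls of radius
`(ℓ/n)^{1/k}` centered at `x₀` and `x₁`. -/
def ballInter (k n : ℕ) (x₀ x₁ : EuclideanSpace ℝ (Fin k)) (ℓ : ℝ) : ℝ :=
  (volume (Metric.closedBall x₀ ((ℓ / (n : ℝ)) ^ ((1 : ℝ) / (k : ℝ))) ∩
    Metric.closedBall x₁ ((ℓ / (n : ℝ)) ^ ((1 : ℝ) / (k : ℝ))))).toReal

abbrev EE (m : ℕ) := EuclideanSpace ℝ (Fin (m + 1))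

def coneS (m : ℕ) (h s r : ℝ) : Set (EE m) := {q | ‖q‖ ≤ r ∧ h * ‖q‖ ≤ s * q 0}

def capS (m : ℕ) (h r : ℝ) : Set (EE m) := {q | ‖q‖ ≤ r ∧ h ≤ q 0}

lemma coneS_meas (m : ℕ) (h s r : ℝ) : MeasurableSet (coneS m h s r) := by
  exact (measurableSet_le (f := fun q : EE m => ‖q‖) (g := fun q => r) (by fun_prop) (by fun_prop)).inter
      (measurableSet_le (f := fun q : EE m => h * ‖q‖) (g := fun q => s * q 0) (by fun_prop) (by fun_prop))

lemma capS_meas (m : ℕ) (h r : ℝ) : MeasurableSet (capS m h r) := by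
  exact (measurableSet_le (f := fun q : EE m => ‖q‖) (g := fun q => r) (by fun_prop) (by fun_prop)).inter
      (measurableSet_le (f := fun q : EE m => h) (g := fun q => q 0) (by fun_prop) (by fun_prop))

lemma fin_of_norm {m : ℕ} {S : Set (EE m)} (r : ℝ) (h : ∀ q ∈ S, ‖q‖ ≤ r) : volume S ≠ ⊤ := by
  have : S ⊆ Metric.closedBall 0 r := fun q hq => by simpa using h q hq
  exact ne_top_of_le_ne_top measure_closedBall_lt_top.ne (measure_mono this)

lemma coneS_fin (m : ℕ) (h s r : ℝ) : volume (coneS m h s r) ≠ ⊤ :=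
  fin_of_norm r fun _ hq => hq.1

lemma capS_fin (m : ℕ) (h r : ℝ) : volume (capS m h r) ≠ ⊤ :=
  fin_of_norm r fun _ hq => hq.1

open Pointwise in
lemma coneS_scale (m : ℕ) (h s r : ℝ) (hr : 0 ≤ r) :
    volume.real (coneS m h s r) = r ^ (m + 1) * volume.real (coneS m h s 1) := by
  have key : coneS m h s r = r • coneS m h s 1 := by
    rcases hr.eq_or_lt with rfl | hr
    · ext q
      simp only [coneS, Set.mem_ofPred_eq, Set.mem_smul_set, zero_smul]
      constructor
      · rintro ⟨h1, -⟩
        have : q = 0 := by simpa using h1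
        exact ⟨0, by simp, this.symm⟩
      · rintro ⟨p, -, rfl⟩
        simp
    · ext q
      rw [Set.mem_smul_set_iff_inv_smul_mem₀ hr.ne']
      simp only [coneS, Set.mem_ofPred_eq, norm_smul, norm_inv, Real.norm_eq_abs, abs_of_pos hr,
        PiLp.smul_apply, smul_eq_mul]
      have e1 : r⁻¹ * ‖q‖ ≤ 1 ↔ ‖q‖ ≤ r := by
        rw [inv_mul_le_iff₀ hr, mul_one]
      have e2 : h * (r⁻¹ * ‖q‖) ≤ s * (r⁻¹ * q 0) ↔ h * ‖q‖ ≤ s * q 0 := by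
        rw [mul_left_comm, mul_left_comm s]
        exact mul_le_mul_iff_right₀ (by positivity)
      rw [e1, e2]
  rw [key, measureReal_def, Measure.addHaar_smul, ENNReal.toReal_mul, ENNReal.toReal_ofReal (abs_nonneg _),
    abs_of_nonneg (by positivity)]
  simp [measureReal_def]

lemma coneS_sub (m : ℕ) (h s r t : ℝ) (hr : r ≤ t) : coneS m h s r ⊆ coneS m h s t :=
  fun _ hq => ⟨hq.1.trans hr, hq.2⟩

lemma cap_lower (m : ℕ) (h s t : ℝ) (hh : 0 < h) (hs : 0 ≤ s) (hst : s ≤ t) :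
    (t ^ (m + 1) - s ^ (m + 1)) * volume.real (coneS m h s 1) ≤
      volume.real (capS m h t) - volume.real (capS m h s) := by
  have h1 : volume.real (coneS m h s t \ coneS m h s s) =
      volume.real (coneS m h s t) - volume.real (coneS m h s s) :=
    measureReal_sdiff (coneS_sub _ _ _ _ _ hst) (coneS_meas _ _ _ _) (coneS_fin _ _ _ _)
  have hd : Disjoint (capS m h s) (coneS m h s t \ coneS m h s s) := by
    rw [Set.disjoint_left]
    rintro q ⟨a, -⟩ ⟨⟨-, b⟩, c⟩
    exact c ⟨a, b⟩
  have h2 := measureReal_union (μ := volume) hd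
    ((coneS_meas _ _ _ _).diff (coneS_meas _ _ _ _)) (capS_fin _ _ _)
    (ne_top_of_le_ne_top (coneS_fin m h s t) (measure_mono Set.sdiff_subset))
  have h3 : capS m h s ∪ (coneS m h s t \ coneS m h s s) ⊆ capS m h t := by
    rintro q (⟨a, b⟩ | ⟨⟨a, b⟩, c⟩)
    · exact ⟨a.trans hst, b⟩
    · refine ⟨a, ?_⟩
      have c' : s < ‖q‖ := by
        by_contra hc
        exact c ⟨not_lt.mp hc, b⟩
      have q0 : 0 ≤ q 0 := by
        by_contra hq
        have : 0 < h * ‖q‖ := mul_pos hh (hs.trans_lt c')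
        nlinarith
      have : h * ‖q‖ ≤ q 0 * ‖q‖ := by nlinarith
      exact le_of_mul_le_mul_right this (hs.trans_lt c')
  have h4 := measureReal_mono (μ := volume) h3 (capS_fin m h t)
  rw [coneS_scale m h s t (hs.trans hst), coneS_scale m h s s hs] at h1
  linarith

lemma cap_upper (m : ℕ) (h s t : ℝ) (hh : 0 < h) (hs : 0 ≤ s) (hst : s ≤ t) :
    volume.real (capS m h t) - volume.real (capS m h s) ≤
    (t ^ (m + 1) - s ^ (m + 1)) * volume.real (coneS m h t 1) := by
  have h1 : volume.real (coneS m h t t \ coneS m h t s) =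
      volume.real (coneS m h t t) - volume.real (coneS m h t s) :=
    measureReal_sdiff (coneS_sub _ _ _ _ _ hst) (coneS_meas _ _ _ _) (coneS_fin _ _ _ _)
  have h3 : capS m h t ⊆ capS m h s ∪ (coneS m h t t \ coneS m h t s) := by
    rintro q ⟨a, b⟩
    by_cases c : ‖q‖ ≤ s
    · exact Or.inl ⟨c, b⟩
    · refine Or.inr ⟨⟨a, ?_⟩, fun d => c d.1⟩
      have := norm_nonneg q
      nlinarith
  have h4 := measureReal_mono (μ := volume) h3 (measure_union_ne_top (capS_fin m h s)
    (ne_top_of_le_ne_top (coneS_fin m h t t) (measure_mono Set.sdiff_subset)))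
  have h5 := measureReal_union_le (μ := volume) (capS m h s) (coneS m h t t \ coneS m h t s)
  rw [coneS_scale m h t t (hs.trans hst), coneS_scale m h t s hs] at h1
  linarith

lemma half_lens (m : ℕ) (x y : EE m) (r : ℝ) (hxy : x ≠ y) :
    volume.real {p | dist p x ≤ r ∧ dist p y ≤ dist p x} =
      volume.real (capS m (dist x y / 2) r) := by
  set D := dist x y with hD
  have hDpos : 0 < D := dist_pos.mpr hxy
  set e : EE m := D⁻¹ • (y - x) with he
  have hn : ‖y - x‖ = D := by rw [hD, dist_comm, dist_eq_norm]
  have hen : ‖e‖ = 1 := by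
    rw [he, norm_smul, hn, norm_inv, Real.norm_eq_abs, abs_of_pos hDpos, inv_mul_cancel₀ hDpos.ne']
  obtain ⟨b, hb⟩ := Orthonormal.exists_orthonormalBasis_extension_of_card_eq (𝕜 := ℝ) (E := EE m)
    (ι := Fin (m + 1)) (by simp) (v := fun _ => e) (s := {0}) (by
      constructor
      · intro i; simpa using hen
      · intro i j hij
        exact absurd (Subsingleton.elim i j) hij)
  have hb0 : b 0 = e := hb 0 rfl
  have hmp : MeasurePreserving (fun p : EE m => b.repr (p - x)) volume volume :=
    b.repr.measurePreserving.comp (measurePreserving_sub_right volume x)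
  have hpre : (fun p : EE m => b.repr (p - x)) ⁻¹' capS m (D / 2) r =
      {p | dist p x ≤ r ∧ dist p y ≤ dist p x} := by
    ext p
    simp only [capS, Set.mem_preimage, Set.mem_ofPred_eq, LinearIsometryEquiv.norm_map,
      b.repr_apply_apply, hb0, dist_eq_norm]
    refine and_congr_right fun _ => ?_
    have e1 : p - y = (p - x) - (y - x) := by abel
    have e2 : ‖p - y‖ ^ 2 = ‖p - x‖ ^ 2 - 2 * inner ℝ (p - x) (y - x) + D ^ 2 := by
      rw [e1, norm_sub_sq_real, hn]
    have e3 : inner ℝ e (p - x) = D⁻¹ * inner ℝ (p - x) (y - x) := by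
      rw [he, inner_smul_left, real_inner_comm]; simp
    rw [e3, ← sq_le_sq₀ (norm_nonneg _) (norm_nonneg _), e2, inv_mul_eq_div, le_div_iff₀ hDpos]
    constructor <;> intro <;> nlinarith
  rw [← hpre, measureReal_def, measureReal_def, hmp.measure_preimage (capS_meas _ _ _).nullMeasurableSet]

lemma lens (m : ℕ) (x y : EE m) (r : ℝ) (hxy : x ≠ y) :
    volume.real (Metric.closedBall x r ∩ Metric.closedBall y r) =
      2 * volume.real (capS m (dist x y / 2) r) := by
  have hU : Metric.closedBall x r ∩ Metric.closedBall y r =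
      {p | dist p x ≤ r ∧ dist p y ≤ dist p x} ∪ {p | dist p y ≤ r ∧ dist p x ≤ dist p y} := by
    ext p
    simp only [Set.mem_inter_iff, Metric.mem_closedBall, Set.mem_union, Set.mem_ofPred_eq]
    constructor
    · rintro ⟨a, b⟩
      rcases le_total (dist p y) (dist p x) with c | c
      · exact Or.inl ⟨a, c⟩
      · exact Or.inr ⟨b, c⟩
    · rintro (⟨a, b⟩ | ⟨a, b⟩)
      · exact ⟨a, b.trans a⟩
      · exact ⟨b.trans a, a⟩
  have hm : MeasurableSet {p : EE m | dist p y ≤ r ∧ dist p x ≤ dist p y} := by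
    exact (measurableSet_le (f := fun p : EE m => dist p y) (g := fun p => r) (by fun_prop) (by fun_prop)).inter
      (measurableSet_le (f := fun p : EE m => dist p x) (g := fun p => dist p y) (by fun_prop) (by fun_prop))
  have hf : ∀ u v : EE m, volume {p : EE m | dist p u ≤ r ∧ dist p v ≤ dist p u} ≠ ⊤ := by
    intro u v
    exact ne_top_of_le_ne_top (measure_closedBall_lt_top (x := u) (r := r)).ne
      (measure_mono fun p hp => hp.1)
  have h1 := measureReal_union_add_inter (μ := volume)
    (s := {p : EE m | dist p x ≤ r ∧ dist p y ≤ dist p x}) hm (hf _ _) (hf _ _)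
  have h0 : volume.real ({p : EE m | dist p x ≤ r ∧ dist p y ≤ dist p x} ∩
      {p | dist p y ≤ r ∧ dist p x ≤ dist p y}) = 0 := by
    rw [measureReal_def]
    have : volume ({p : EE m | dist p x ≤ r ∧ dist p y ≤ dist p x} ∩
      {p | dist p y ≤ r ∧ dist p x ≤ dist p y}) = 0 := by
      refine measure_mono_null ?_ (Measure.addHaar_affineSubspace volume
        (AffineSubspace.perpBisector x y) (by simpa using hxy))
      rintro p ⟨⟨-, a⟩, ⟨-, b⟩⟩
      exact AffineSubspace.mem_perpBisector_iff_dist_eq.mpr (le_antisymm b a)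
    simp [this]
  rw [h0, half_lens m x y r hxy, half_lens m y x r hxy.symm, dist_comm y x] at h1
  rw [hU]; linarith

lemma gdiff (a b : ℝ) (ha : 0 ≤ a) (hab : a ≤ b) (hb : b ≤ 4 / 5) :
    b - a ≤ b / √(1 - b ^ 2) - a / √(1 - a ^ 2) := by
  have hb1 : 0 < √(1 - b ^ 2) := Real.sqrt_pos.mpr (by nlinarith)
  have hba : √(1 - b ^ 2) ≤ √(1 - a ^ 2) := Real.sqrt_le_sqrt (by nlinarith)
  have h1 : √(1 - b ^ 2) ≤ 1 := Real.sqrt_le_one.mpr (by nlinarith)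
  have h2 : 1 ≤ 1 / √(1 - b ^ 2) := by rw [le_div_iff₀ hb1]; linarith
  have h3 : 1 / √(1 - a ^ 2) ≤ 1 / √(1 - b ^ 2) := one_div_le_one_div_of_le hb1 hba
  have : b / √(1 - b ^ 2) - a / √(1 - a ^ 2) =
    (b - a) * (1 / √(1 - b ^ 2)) + a * (1 / √(1 - b ^ 2) - 1 / √(1 - a ^ 2)) := by ring
  rw [this]
  nlinarith

lemma real_band (a b n t Q : ℝ) (ha : 0 ≤ a) (hab : a ≤ b) (hb : b ≤ 4 / 5) (hqn : 0 ≤ Q)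
    (hz1 : 1 / 2 < n) (hz2 : n < 3 / 5) (ht1 : a / √(1 - a ^ 2) * n < t)
    (ht2 : t < b / √(1 - b ^ 2) * n) (hq : Q ^ 2 = t ^ 2 + n ^ 2) :
    Q ≤ 1 ∧ a * Q ≤ t ∧ t < b * Q := by
  have hn0 : 0 < n := by linarith
  set ga := a / √(1 - a ^ 2) with hga
  set gb := b / √(1 - b ^ 2) with hgb
  have hsa : 0 < √(1 - a ^ 2) := Real.sqrt_pos.mpr (by nlinarith)
  have hsb : 0 < √(1 - b ^ 2) := Real.sqrt_pos.mpr (by nlinarith)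
  have hsa2 : √(1 - a ^ 2) ^ 2 = 1 - a ^ 2 := Real.sq_sqrt (by nlinarith)
  have hsb2 : √(1 - b ^ 2) ^ 2 = 1 - b ^ 2 := Real.sq_sqrt (by nlinarith)
  have hga0 : 0 ≤ ga := div_nonneg ha hsa.le
  have hb0 : 0 ≤ b := ha.trans hab
  have hgb0 : 0 ≤ gb := div_nonneg hb0 hsb.le
  have ht0 : 0 ≤ t := (mul_nonneg hga0 hn0.le).trans ht1.le
  have A1 : a * n ≤ t * √(1 - a ^ 2) := by
    have : ga * √(1 - a ^ 2) = a := by rw [hga]; field_simp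
    nlinarith
  have B1 : t * √(1 - b ^ 2) < b * n := by
    have : gb * √(1 - b ^ 2) = b := by rw [hgb]; field_simp
    nlinarith
  have A2 : a ^ 2 * n ^ 2 ≤ t ^ 2 * (1 - a ^ 2) := by
    rw [← hsa2, ← mul_pow, ← mul_pow]
    exact pow_le_pow_left₀ (by positivity) A1 2
  have B2 : t ^ 2 * (1 - b ^ 2) < b ^ 2 * n ^ 2 := by
    rw [← hsb2, ← mul_pow, ← mul_pow]
    exact pow_lt_pow_left₀ B1 (by positivity) two_ne_zero
  refine ⟨?_, ?_, ?_⟩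
  · rw [← sq_le_sq₀ hqn zero_le_one, hq]
    have : b ^ 2 ≤ 16 / 25 := by nlinarith
    have h2 : n ^ 2 ≤ 9 / 25 := by nlinarith
    have h3 : t ^ 2 * (1 - 16 / 25) ≤ t ^ 2 * (1 - b ^ 2) := by gcongr
    have h4 : b ^ 2 * n ^ 2 ≤ 16 / 25 * n ^ 2 := by gcongr
    linarith
  · rw [← sq_le_sq₀ (by positivity) ht0, mul_pow, hq]; nlinarith
  · rw [← sq_lt_sq₀ ht0 (by positivity), mul_pow, hq]; nlinarith

lemma band (m : ℕ) (hm : 1 ≤ m) : ∃ c : ℝ, 0 < c ∧ ∀ a b : ℝ, 0 ≤ a → a ≤ b → b ≤ 4 / 5 →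
    c * (b - a) ≤ volume.real {q : EE m | ‖q‖ ≤ 1 ∧ a * ‖q‖ ≤ q 0 ∧ q 0 < b * ‖q‖} := by
  set N : (Fin m → ℝ) → ℝ := fun z => √(∑ i, z i ^ 2) with hN
  have hNc : Continuous N := by fun_prop
  set Z : Set (Fin m → ℝ) := {z | 1 / 2 < N z ∧ N z < 3 / 5} with hZ
  have hZo : IsOpen Z :=
    (isOpen_lt continuous_const hNc).inter (isOpen_lt hNc continuous_const)
  have hZne : Z.Nonempty := by
    refine ⟨Pi.single ⟨0, hm⟩ (11 / 20), ?_⟩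
    have : N (Pi.single ⟨0, hm⟩ (11 / 20)) = 11 / 20 := by
      have e : ∑ i, (Pi.single (⟨0, hm⟩ : Fin m) (11 / 20 : ℝ) : Fin m → ℝ) i ^ 2 = (11 / 20) ^ 2 := by
        rw [Finset.sum_eq_single ⟨0, hm⟩]
        · simp
        · intro j _ hj; simp [hj]
        · simp
      rw [hN]
      simp only
      rw [e, Real.sqrt_sq (by norm_num)]
    constructor <;> rw [this] <;> norm_num
  have hZpos : 0 < volume Z := hZo.measure_pos volume hZne
  have hZfin : volume Z ≠ ⊤ := by
    apply Bornology.IsBounded.measure_lt_top _ |>.ne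
    refine (Metric.isBounded_closedBall (x := (0 : Fin m → ℝ)) (r := 1)).subset ?_
    intro z hz
    rw [mem_closedBall_zero_iff, pi_norm_le_iff_of_nonneg zero_le_one]
    intro i
    have h1 : |z i| ≤ N z := by
      rw [← Real.sqrt_sq_eq_abs]
      apply Real.sqrt_le_sqrt
      exact Finset.single_le_sum (f := fun i => z i ^ 2) (fun j _ => sq_nonneg _) (Finset.mem_univ i)
    rw [Real.norm_eq_abs]
    linarith [hz.2]
  refine ⟨1 / 2 * volume.real Z, by
    have := ENNReal.toReal_pos hZpos.ne' hZfin
    rw [measureReal_def]; positivity, ?_⟩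
  intro a b ha hab hb
  set ga := a / √(1 - a ^ 2) with hga
  set gb := b / √(1 - b ^ 2) with hgb
  have hg := gdiff a b ha hab hb
  set T := regionBetween (fun z => ga * N z) (fun z => gb * N z) Z with hT
  have hTm : MeasurableSet T := measurableSet_regionBetween (by fun_prop) (by fun_prop) hZo.measurableSet
  have hTv : volume T = ∫⁻ z in Z, ENNReal.ofReal (gb * N z - ga * N z) := by
    rw [hT, Measure.volume_eq_prod]
    exact volume_regionBetween_eq_lintegral (by fun_prop) (by fun_prop) hZo.measurableSet
  have hTlow : ENNReal.ofReal (1 / 2 * (b - a)) * volume Z ≤ volume T := by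
    rw [hTv, ← setLIntegral_const]
    apply setLIntegral_mono' hZo.measurableSet
    intro z hz
    apply ENNReal.ofReal_le_ofReal
    have := hz.1
    nlinarith
  set F : EE m → (Fin m → ℝ) × ℝ := fun q => (fun j => q j.succ, q 0) with hF
  have hFmp : MeasurePreserving F volume volume := by
    have h1 := PiLp.volume_preserving_ofLp (Fin (m + 1))
    have h2 := volume_preserving_piFinSuccAbove (fun _ : Fin (m + 1) => ℝ) 0
    have h3 : MeasurePreserving (Prod.swap : ℝ × (Fin m → ℝ) → _) volume volume :=
      Measure.measurePreserving_swap
    exact h3.comp (h2.comp h1)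
  have hsub : F ⁻¹' T ⊆ {q : EE m | ‖q‖ ≤ 1 ∧ a * ‖q‖ ≤ q 0 ∧ q 0 < b * ‖q‖} := by
    rintro q ⟨⟨hz1, hz2⟩, ht1, ht2⟩
    simp only [hF] at hz1 hz2 ht1 ht2
    set n := N (fun j => q j.succ) with hn
    set t := q 0 with ht
    have hq : ‖q‖ ^ 2 = t ^ 2 + n ^ 2 := by
      rw [EuclideanSpace.norm_sq_eq, Fin.sum_univ_succ, hn, hN]
      simp only [Real.norm_eq_abs, sq_abs]
      rw [Real.sq_sqrt (Finset.sum_nonneg fun i _ => sq_nonneg _)]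
    exact real_band a b n t ‖q‖ ha hab hb (norm_nonneg q) hz1 hz2 ht1 ht2 hq
  have hfin : volume {q : EE m | ‖q‖ ≤ 1 ∧ a * ‖q‖ ≤ q 0 ∧ q 0 < b * ‖q‖} ≠ ⊤ :=
    fin_of_norm 1 fun _ hq => hq.1
  have h5 := hTlow.trans ((hFmp.measure_preimage hTm.nullMeasurableSet).symm.le.trans (measure_mono hsub))
  have h6 := ENNReal.toReal_mono hfin h5
  rw [ENNReal.toReal_mul, ENNReal.toReal_ofReal (by linarith)] at h6
  rw [measureReal_def, measureReal_def]
  linarith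

lemma cone_diff (m : ℕ) (hm : 1 ≤ m) : ∃ c : ℝ, 0 < c ∧ ∀ h s t : ℝ, 0 < h → 0 < s → s ≤ t →
    h / s ≤ 4 / 5 →
    c * (h / s - h / t) ≤ volume.real (coneS m h t 1) - volume.real (coneS m h s 1) := by
  obtain ⟨c, hc, H⟩ := band m hm
  refine ⟨c, hc, fun h s t hh hs hst hb => ?_⟩
  have ht : 0 < t := hs.trans_le hst
  have h1 := H (h / t) (h / s) (by positivity) (by gcongr) hb
  have hd : Disjoint {q : EE m | ‖q‖ ≤ 1 ∧ h / t * ‖q‖ ≤ q 0 ∧ q 0 < h / s * ‖q‖}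
      (coneS m h s 1) := by
    rw [Set.disjoint_left]
    rintro q ⟨-, -, b⟩ ⟨-, d⟩
    rw [div_mul_eq_mul_div, lt_div_iff₀ hs] at b
    linarith
  have h2 := measureReal_union (μ := volume) hd (coneS_meas _ _ _ _)
    (fin_of_norm 1 fun _ hq => hq.1) (coneS_fin _ _ _ _)
  have h3 : {q : EE m | ‖q‖ ≤ 1 ∧ h / t * ‖q‖ ≤ q 0 ∧ q 0 < h / s * ‖q‖} ∪ (coneS m h s 1) ⊆
      coneS m h t 1 := by
    rintro q (⟨a, b, -⟩ | ⟨a, b⟩)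
    · rw [div_mul_eq_mul_div, div_le_iff₀ ht] at b
      exact ⟨a, by linarith⟩
    · refine ⟨a, b.trans ?_⟩
      have : 0 ≤ s * q 0 := (mul_nonneg hh.le (norm_nonneg q)).trans b
      have : 0 ≤ q 0 := nonneg_of_mul_nonneg_right this hs
      gcongr
  have h4 := measureReal_mono (μ := volume) h3 (coneS_fin _ _ _ _)
  linarith

lemma cone_mono (m : ℕ) (h s t : ℝ) (hh : 0 < h) (hs : 0 ≤ s) (hst : s ≤ t) :
    volume.real (coneS m h s 1) ≤ volume.real (coneS m h t 1) := by
  rcases hst.eq_or_lt with rfl | hlt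
  · exact le_rfl
  have h1 := (cap_lower m h s t hh hs hst).trans (cap_upper m h s t hh hs hst)
  exact le_of_mul_le_mul_left h1 (sub_pos.mpr (pow_lt_pow_left₀ hlt hs (by omega)))

lemma pow_diff (k : ℕ) (s t T : ℝ) (hs : 0 ≤ s) (hst : s ≤ t) (hT : t ≤ T) :
    (t ^ (k + 1) - s ^ (k + 1)) ≤ (k + 1) * T ^ k * (t - s) := by
  induction k with
  | zero => simp
  | succ k ih =>
    have e : t ^ (k + 1 + 1) - s ^ (k + 1 + 1) =
      t * (t ^ (k + 1) - s ^ (k + 1)) + s ^ (k + 1) * (t - s) := by ring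
    have h0 : 0 ≤ t ^ (k + 1) - s ^ (k + 1) := sub_nonneg.mpr (pow_le_pow_left₀ hs hst _)
    have h1 : t * (t ^ (k + 1) - s ^ (k + 1)) ≤ T * ((k + 1) * T ^ k * (t - s)) := by
      have : 0 ≤ t := hs.trans hst
      gcongr
      linarith
    have h2 : s ^ (k + 1) * (t - s) ≤ T ^ (k + 1) * (t - s) := by
      have := hst.trans hT
      gcongr
    rw [e]; push_cast
    calc _ ≤ _ := add_le_add h1 h2
      _ = _ := by ring

lemma P_pow (m n : ℕ) (l : ℝ) (hl : 0 ≤ l) :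
    ((l / (n : ℝ)) ^ ((1 : ℝ) / ((m + 1 : ℕ) : ℝ))) ^ (m + 1) = l / n := by
  rw [one_div]
  exact Real.rpow_inv_natCast_pow (by positivity) (by omega)

lemma P2 (m : ℕ) (hm : 1 ≤ m) (M : ℝ) (hM : 1 ≤ M) :
    ∃ α : ℝ, 0 < α ∧ ∀ n : ℕ, 1 ≤ n → ∀ τ r : ℝ, 0 ≤ τ → 2 * τ ≤ r → r ≤ M →
      ∀ x y : EE m, x ≠ y →
      4 / 5 * (r / (n : ℝ)) ^ ((1 : ℝ) / ((m + 1 : ℕ) : ℝ)) ≤ dist x y →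
      dist x y ≤ 11 / 10 * (r / (n : ℝ)) ^ ((1 : ℝ) / ((m + 1 : ℕ) : ℝ)) →
      ConvexOn ℝ (Set.Icc (r - 2 * τ) r) (ballInter (m + 1) n x y) ∧
      α / (n : ℝ) * τ ^ 2 ≤ ballInter (m + 1) n x y r - 2 * ballInter (m + 1) n x y (r - τ) +
                ballInter (m + 1) n x y (r - 2 * τ) := by
  obtain ⟨c, hc, H⟩ := cone_diff m hm
  refine ⟨c / (5 * (m + 1) * M), by positivity, ?_⟩
  intro n hn τ r hτ hτr hrM x y hxy hlow hup
  have hn0 : (0 : ℝ) < n := by exact_mod_cast hn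
  set P : ℝ → ℝ := fun l => (l / (n : ℝ)) ^ ((1 : ℝ) / ((m + 1 : ℕ) : ℝ)) with hP
  have hPpow : ∀ l, 0 ≤ l → P l ^ (m + 1) = l / n := fun l hl => P_pow m n l hl
  have hP0 : ∀ l, 0 ≤ l → 0 ≤ P l := fun l hl => Real.rpow_nonneg (by positivity) _
  have hPm : ∀ s t, 0 ≤ s → s ≤ t → P s ≤ P t := fun s t hs hst =>
    Real.rpow_le_rpow (by positivity) (by gcongr) (by positivity)
  set h := dist x y / 2 with hh
  have hh0 : 0 < h := half_pos (dist_pos.mpr hxy)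
  set C : ℝ → ℝ := fun l => volume.real (coneS m h (P l) 1) with hC
  set I := ballInter (m + 1) n x y with hI
  have hIe : ∀ l, I l = 2 * volume.real (capS m h (P l)) := fun l => lens m x y (P l) hxy
  have lo : ∀ s t, 0 ≤ s → s ≤ t → (t - s) / n * (2 * C s) ≤ I t - I s := by
    intro s t hs hst
    have := cap_lower m h (P s) (P t) hh0 (hP0 s hs) (hPm s t hs hst)
    rw [hPpow s hs, hPpow t (hs.trans hst), ← sub_div] at this
    rw [hIe, hIe]; simp only [hC]; linarith
  have up : ∀ s t, 0 ≤ s → s ≤ t → I t - I s ≤ (t - s) / n * (2 * C t) := by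
    intro s t hs hst
    have := cap_upper m h (P s) (P t) hh0 (hP0 s hs) (hPm s t hs hst)
    rw [hPpow s hs, hPpow t (hs.trans hst), ← sub_div] at this
    rw [hIe, hIe]; simp only [hC]; linarith
  have hρ : 0 < P r := by
    have : 0 < dist x y := dist_pos.mpr hxy
    have : dist x y ≤ 11 / 10 * P r := hup
    linarith
  have hr : 0 < r := by
    rcases (show 0 ≤ r by linarith).eq_or_lt with h0 | h0
    · have := hPpow r (by linarith)
      rw [← h0] at this hρ
      have h2 := pow_pos hρ (m + 1)
      rw [this] at h2
      simp at h2
    · exact h0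
  constructor
  · apply convexOn_of_slope_mono_adjacent (convex_Icc _ _)
    intro u v w hu hw huv hvw
    have hu0 : 0 ≤ u := by linarith [hu.1]
    have a1 := up u v hu0 huv.le
    have a2 := lo v w (hu0.trans huv.le) hvw.le
    refine le_trans (b := 2 * C v / n) ?_ ?_
    · rw [div_le_iff₀ (by linarith)]
      calc _ ≤ _ := a1
        _ = _ := by ring
    · rw [le_div_iff₀ (by linarith)]
      calc _ = (w - v) / n * (2 * C v) := by ring
        _ ≤ _ := a2
  · have b1 := lo (r - τ) (r - τ / 2) (by linarith) (by linarith)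
    have b2 := lo (r - τ / 2) r (by linarith) (by linarith)
    have b3 := up (r - 2 * τ) (r - τ) (by linarith) (by linarith)
    set s := P (r - τ) with hs
    set t := P (r - τ / 2) with ht
    have hst : s ≤ t := hPm _ _ (by linarith) (by linarith)
    have htr : t ≤ P r := hPm _ _ (by linarith) (by linarith)
    have hs1 : 7 / 10 * P r ≤ s := by
      apply le_of_pow_le_pow_left₀ (n := m + 1) (by omega) (hP0 _ (by linarith))
      rw [mul_pow, hPpow r hr.le, hPpow _ (by linarith)]
      have e1 : (7 / 10 : ℝ) ^ (m + 1) ≤ (7 / 10) ^ 2 :=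
        pow_le_pow_of_le_one (by norm_num) (by norm_num) (by omega)
      calc (7 / 10 : ℝ) ^ (m + 1) * (r / n) ≤ (7 / 10) ^ 2 * (r / n) := by gcongr
        _ = ((7 / 10) ^ 2 * r) / n := by ring
        _ ≤ (r - τ) / n := by gcongr; linarith
    have hs0 : 0 < s := by linarith
    have ht0 : 0 < t := by linarith
    have hup' : h ≤ 11 / 20 * P r := by
      have : dist x y ≤ 11 / 10 * P r := hup
      linarith
    have hlow' : 2 / 5 * P r ≤ h := by
      have : 4 / 5 * P r ≤ dist x y := hlow
      linarith
    have hb := H h s t hh0 hs0 hst (by rw [div_le_iff₀ hs0]; linarith)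
    have hpd := pow_diff m s t (P r) hs0.le hst htr
    rw [hs, ht, hPpow _ (by linarith), hPpow _ (by linarith), ← hs, ← ht] at hpd
    -- lower bound on the increment
    have hab : τ / (5 * (m + 1) * M) ≤ h / s - h / t := by
      have e1 : h / s - h / t = h * (t - s) / (s * t) := by
        field_simp
      have e2 : h * (t - s) / (P r * P r) ≤ h * (t - s) / (s * t) := by
        have : 0 ≤ t - s := by linarith
        have : s ≤ P r := hst.trans htr
        gcongr
      have e3 : 2 / 5 * P r * (t - s) / (P r * P r) ≤ h * (t - s) / (P r * P r) := by
        have : 0 ≤ t - s := by linarith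
        gcongr
      have e4 : τ / (5 * (m + 1) * r) ≤ 2 / 5 * P r * (t - s) / (P r * P r) := by
        have e5 : 2 / 5 * P r * (t - s) / (P r * P r) = 2 / 5 * (t - s) / P r := by
          field_simp
        rw [e5, div_le_div_iff₀ (by positivity) hρ]
        have e6 : P r ^ m * P r = r / n := by rw [← pow_succ, hPpow r hr.le]
        have e7 : τ / (2 * n) * P r ≤ (m + 1) * (r / n) * (t - s) := by
          rw [← e6]
          have : ((r - τ / 2) / n - (r - τ) / n) = τ / (2 * n) := by field_simp; ring
          rw [this] at hpd
          calc _ ≤ (m + 1) * P r ^ m * (t - s) * P r := by gcongr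
            _ = _ := by ring
        have e8 : (2 * n) * (τ / (2 * n) * P r) ≤ (2 * n) * ((m + 1) * (r / n) * (t - s)) := by
          gcongr
        have e9 : (2 * n) * (τ / (2 * n) * P r) = τ * P r := by field_simp
        have e10 : (2 * n) * ((m + 1) * (r / n) * (t - s)) = 2 * (m + 1) * r * (t - s) := by
          field_simp
        rw [e9, e10] at e8
        linarith
      have e5 : τ / (5 * (m + 1) * M) ≤ τ / (5 * (m + 1) * r) := by gcongr
      linarith
    have hfin : c * (τ / (5 * (m + 1) * M)) ≤ C (r - τ / 2) - C (r - τ) :=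
      (mul_le_mul_of_nonneg_left hab hc.le).trans hb
    have h7 : τ / n * (c * (τ / (5 * (m + 1) * M))) ≤ τ / n * (C (r - τ / 2) - C (r - τ)) := by
      gcongr
    have h8 : c / (5 * (m + 1) * M) / n * τ ^ 2 = τ / n * (c * (τ / (5 * (m + 1) * M))) := by
      field_simp
    rw [h8]
    have f1 : (r - τ / 2 - (r - τ)) / n * (2 * C (r - τ)) = τ / n * C (r - τ) := by ring
    have f2 : (r - (r - τ / 2)) / n * (2 * C (r - τ / 2)) = τ / n * C (r - τ / 2) := by ring
    have f3 : (r - τ - (r - 2 * τ)) / n * (2 * C (r - τ)) = 2 * (τ / n * C (r - τ)) := by ring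
    rw [f1] at b1
    rw [f2] at b2
    rw [f3] at b3
    linarith

lemma volR (m : ℕ) (x : EE m) (r : ℝ) (hr : 0 ≤ r) :
    (volume (Metric.closedBall x r)).toReal =
      (Real.pi ^ (((m + 1 : ℕ) : ℝ) / 2) / Real.Gamma (1 + ((m + 1 : ℕ) : ℝ) / 2)) * r ^ (m + 1) := by
  rw [EuclideanSpace.volume_closedBall, ENNReal.toReal_mul, ENNReal.toReal_pow,
    ENNReal.toReal_ofReal hr, ENNReal.toReal_ofReal, Fintype.card_fin, add_comm _ (1 : ℝ),
    Real.sqrt_eq_rpow, ← Real.rpow_natCast (Real.pi ^ (1 / 2 : ℝ)), ← Real.rpow_mul Real.pi_pos.le,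
    mul_comm, one_div_mul_eq_div]
  · have := Real.Gamma_pos_of_pos (s := ((Fintype.card (Fin (m + 1)) : ℕ) : ℝ) / 2 + 1) (by positivity)
    positivity

/-- **Geometric properties of special pattern cells.**
Fix `k ≥ 2` and `M ≥ 1`.  With `w' = 6M^{1/k}`, `R = (1/10)(r₂/n)^{1/k}`,
`R' = (1 - 10^{-k})^{1/k}(r₂/n)^{1/k}`, `R'' = (r₂/n)^{1/k}`,
`R''' = √k w'/n^{1/k} + 2(M/n)^{1/k}`, and `A` the axis-aligned hypercube of side
`w'/n^{1/k}` centered at `x_A`, contained in `[0,1]^k`, the properties (P1)-(P4) hold,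
with the constant in (P2) depending only on `M` and `k`. -/
theorem special_pattern_cell_properties (k : ℕ) (hk : 2 ≤ k) (M : ℝ) (hM : 1 ≤ M) :
    ∃ α : ℝ, 0 < α ∧
      ∀ n : ℕ, 1 ≤ n → ∀ τ r₂ : ℝ, 0 ≤ τ → 2 * τ ≤ r₂ → r₂ ≤ M →
      ∀ x_A : EuclideanSpace ℝ (Fin k),
      ∀ w' R R' R'' R''' : ℝ,
        w' = 6 * M ^ ((1 : ℝ) / (k : ℝ)) →
        R = (1 / 10) * (r₂ / (n : ℝ)) ^ ((1 : ℝ) / (k : ℝ)) →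
        R' = (1 - (10 : ℝ) ^ (-(k : ℤ))) ^ ((1 : ℝ) / (k : ℝ)) *
          (r₂ / (n : ℝ)) ^ ((1 : ℝ) / (k : ℝ)) →
        R'' = (r₂ / (n : ℝ)) ^ ((1 : ℝ) / (k : ℝ)) →
        R''' = Real.sqrt k * w' / (n : ℝ) ^ ((1 : ℝ) / (k : ℝ)) +
          2 * (M / (n : ℝ)) ^ ((1 : ℝ) / (k : ℝ)) →
      ∀ A : Set (EuclideanSpace ℝ (Fin k)),
        A = {y | ∀ i, |y i - x_A i| ≤ w' / (2 * (n : ℝ) ^ ((1 : ℝ) / (k : ℝ)))} →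
        A ⊆ {y | ∀ i, y i ∈ Set.Icc (0 : ℝ) 1} →
        -- (P1)
        (((volume (Metric.closedBall x_A R'' \ Metric.closedBall x_A R')).toReal =
            (volume (Metric.closedBall x_A R)).toReal ∧
          (volume (Metric.closedBall x_A R)).toReal =
            (Real.pi ^ ((k : ℝ) / 2) / Real.Gamma (1 + (k : ℝ) / 2)) * r₂ /
              (10 ^ k * (n : ℝ)) ∧
          (Real.pi ^ ((k : ℝ) / 2) / Real.Gamma (1 + (k : ℝ) / 2)) * (2 * τ) /
              (10 ^ k * (n : ℝ)) ≤
            (volume (Metric.closedBall x_A R)).toReal) ∧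
        -- (P2)
        (∀ x₀ ∈ Metric.closedBall x_A R,
          ∀ x₁ ∈ Metric.closedBall x_A R'' \ Metric.closedBall x_A R',
            ConvexOn ℝ (Set.Icc (r₂ - 2 * τ) r₂) (ballInter k n x₀ x₁) ∧
            α / (n : ℝ) * τ ^ 2 ≤
              ballInter k n x₀ x₁ r₂ - 2 * ballInter k n x₀ x₁ (r₂ - τ) +
                ballInter k n x₀ x₁ (r₂ - 2 * τ)) ∧
        -- (P3)
        (Metric.closedBall x_A (R'' + (M / (n : ℝ)) ^ ((1 : ℝ) / (k : ℝ))) ⊆ A ∧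
          A ⊆ Metric.closedBall x_A R''') ∧
        -- (P4)
        (∀ d : EuclideanSpace ℝ (Fin k), (∀ i, d i ∈ Set.Icc (0 : ℝ) 1) →
          d ∉ Metric.closedBall x_A R''' →
            2 * (M / (n : ℝ)) ^ ((1 : ℝ) / (k : ℝ)) < Metric.infDist d A)) := by
  obtain ⟨m, rfl⟩ : ∃ m, k = m + 1 := ⟨k - 1, by omega⟩
  obtain ⟨α, hα, H⟩ := P2 m (by omega) M hM
  refine ⟨α, hα, ?_⟩
  intro n hn τ r hτ hτr hrM x_A w' R R' R'' R''' hw hR hR' hR'' hR''' A hA hAsub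
  have hn0 : (0 : ℝ) < n := by exact_mod_cast hn
  have hr0 : 0 ≤ r := by linarith
  have hk1 : (1 : ℝ) ≤ ((m + 1 : ℕ) : ℝ) := by exact_mod_cast (by omega : 1 ≤ m + 1)
  set p : ℝ := (1 : ℝ) / ((m + 1 : ℕ) : ℝ) with hp
  have hp0 : 0 < p := by positivity
  have hp1 : p ≤ 1 := by rw [hp, div_le_one (by positivity)]; exact hk1
  set ρ := (r / (n : ℝ)) ^ p with hρ
  have hρ0 : 0 ≤ ρ := Real.rpow_nonneg (by positivity) _
  have hρk : ρ ^ (m + 1) = r / n := P_pow m n r hr0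
  set e : ℝ := 1 - (10 : ℝ) ^ (-((m + 1 : ℕ) : ℤ)) with he
  have he' : e = 1 - 1 / 10 ^ (m + 1) := by rw [he, zpow_neg, zpow_natCast, one_div]
  have hten : (1 : ℝ) / 10 ^ (m + 1) ≤ 1 / 10 := by
    apply one_div_le_one_div_of_le (by norm_num)
    exact le_self_pow₀ (by norm_num) (by omega)
  have hten0 : (0 : ℝ) < 1 / 10 ^ (m + 1) := by positivity
  have he9 : 9 / 10 ≤ e := by rw [he']; linarith
  have he1 : e ≤ 1 := by rw [he']; linarith
  set g := e ^ p with hg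
  have hgk : g ^ (m + 1) = e := by
    rw [hg, hp, one_div]; exact Real.rpow_inv_natCast_pow (by linarith) (by omega)
  have hg1 : g ≤ 1 := Real.rpow_le_one (by linarith) he1 hp0.le
  have hg9 : 9 / 10 ≤ g := he9.trans (Real.self_le_rpow_of_le_one (by linarith) he1 hp1)
  have hR'R : R' ≤ R'' := by rw [hR', hR'']; nlinarith
  have hR'0 : 0 ≤ R' := by rw [hR']; positivity
  have hκ : 0 ≤ Real.pi ^ (((m + 1 : ℕ) : ℝ) / 2) / Real.Gamma (1 + ((m + 1 : ℕ) : ℝ) / 2) := by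
    have := Real.Gamma_pos_of_pos (s := 1 + ((m + 1 : ℕ) : ℝ) / 2) (by positivity)
    positivity
  have hvR : (volume (Metric.closedBall x_A R)).toReal =
      (Real.pi ^ (((m + 1 : ℕ) : ℝ) / 2) / Real.Gamma (1 + ((m + 1 : ℕ) : ℝ) / 2)) * r /
        (10 ^ (m + 1) * (n : ℝ)) := by
    rw [volR m x_A R (by rw [hR]; positivity), hR, mul_pow, hρk, div_pow, one_pow]
    field_simp
  have hMn : ρ ≤ (M / (n : ℝ)) ^ p := Real.rpow_le_rpow (by positivity) (by gcongr) hp0.le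
  have hMd : (M / (n : ℝ)) ^ p = M ^ p / (n : ℝ) ^ p := Real.div_rpow (by linarith) hn0.le p
  have hnp : 0 < (n : ℝ) ^ p := Real.rpow_pos_of_pos hn0 p
  have hMp : 0 < M ^ p := Real.rpow_pos_of_pos (by linarith) p
  have hw0 : 0 < w' := by rw [hw]; positivity
  have hAball : ∀ y ∈ A, dist y x_A ≤ √((m + 1 : ℕ) : ℝ) * (w' / (2 * (n : ℝ) ^ p)) := by
    intro y hy
    rw [hA] at hy
    rw [EuclideanSpace.dist_eq, ← Real.sqrt_sq (show 0 ≤ w' / (2 * (n : ℝ) ^ p) by positivity),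
      ← Real.sqrt_mul (by positivity)]
    apply Real.sqrt_le_sqrt
    calc ∑ i, dist (y i) (x_A i) ^ 2 ≤ ∑ i : Fin (m + 1), (w' / (2 * (n : ℝ) ^ p)) ^ 2 := by
          apply Finset.sum_le_sum
          intro i _
          rw [Real.dist_eq]
          exact pow_le_pow_left₀ (abs_nonneg _) (hy i) 2
      _ = _ := by simp
  have hhalf : √((m + 1 : ℕ) : ℝ) * w' / (n : ℝ) ^ p =
      2 * (√((m + 1 : ℕ) : ℝ) * (w' / (2 * (n : ℝ) ^ p))) := by
    field_simp
  have hpos : 0 < √((m + 1 : ℕ) : ℝ) * (w' / (2 * (n : ℝ) ^ p)) := by positivity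
  refine ⟨⟨?_, hvR, ?_⟩, ?_, ⟨?_, ?_⟩, ?_⟩
  · have h1 := measureReal_sdiff (μ := volume) (Metric.closedBall_subset_closedBall (x := x_A) hR'R)
      measurableSet_closedBall measure_closedBall_lt_top.ne
    simp only [measureReal_def] at h1
    rw [h1, hvR, volR m x_A R'' (hR'0.trans hR'R), volR m x_A R' hR'0, hR', hR'', mul_pow, hρk, hgk, he']
    field_simp
    ring
  · rw [hvR]; gcongr
  · intro x₀ hx₀ x₁ hx₁
    obtain ⟨hx₁, hx₁'⟩ := hx₁
    rw [Metric.mem_closedBall] at hx₀ hx₁ hx₁'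
    push Not at hx₁'
    rw [hR] at hx₀
    rw [hR''] at hx₁
    rw [hR'] at hx₁'
    have t1 := dist_triangle x₁ x₀ x_A
    have t2 := dist_triangle_right x₀ x₁ x_A
    rw [dist_comm x₁ x₀] at t1
    have hge : 9 / 10 * ρ ≤ g * ρ := by gcongr
    refine H n hn τ r hτ hτr hrM x₀ x₁ ?_ ?_ ?_
    · intro heq
      rw [heq] at hx₀
      linarith
    · change 4 / 5 * ρ ≤ dist x₀ x₁
      linarith
    · change dist x₀ x₁ ≤ 11 / 10 * ρ
      linarith
  · intro y hy
    rw [hA]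
    intro i
    rw [Metric.mem_closedBall, dist_eq_norm] at hy
    have h1 : |y i - x_A i| ≤ ‖y - x_A‖ := by
      simpa using PiLp.norm_apply_le (y - x_A) i
    have h2 : w' / (2 * (n : ℝ) ^ p) = 3 * (M ^ p / (n : ℝ) ^ p) := by
      rw [hw]; field_simp; norm_num
    have h3 : 0 < M ^ p / (n : ℝ) ^ p := by positivity
    rw [h2]
    rw [hR'', hMd] at hy
    rw [hMd] at hMn
    linarith
  · intro y hy
    rw [Metric.mem_closedBall, hR''', hhalf, hMd]
    have h3 : 0 < M ^ p / (n : ℝ) ^ p := by positivity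
    linarith [hAball y hy]
  · intro d _ hd
    rw [Metric.mem_closedBall, hR''', hhalf] at hd
    push Not at hd
    have hne : A.Nonempty := ⟨x_A, by
      rw [hA]; intro i
      rw [sub_self, abs_zero]
      positivity⟩
    refine lt_of_lt_of_le (b := dist d x_A - √((m + 1 : ℕ) : ℝ) * (w' / (2 * (n : ℝ) ^ p))) (by linarith) ?_
    rw [Metric.le_infDist hne]
    intro y hy
    have := dist_triangle d y x_A
    linarith [hAball y hy]

end
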